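/- Let G ⊆ UT(n,ℝ) be a real unipotent group and let N, H be real algebraic subgroups of G such that G = N·H (every element of G is a product of an element of N and an element of H). Then μ(G) = μ(N)·μ(H) = μ(H)·μ(N), where the products are setwise products of sets of matrices over the hyperreals. -/

import Mathlib

open Pointwise Filter

noncomputable section

/-- Square matrices of size `n` over `R`. -/
abbrev Mat (n : ℕ) (R : Type) : Type := Matrix (Fin n) (Fin n) R

/-- The set `UT(n,ℝ)` of upper triangular matrices with `1`s on the diagonal. -/
def UTset (n : ℕ) : Set (Mat n ℝ) :=
  {A | (∀ i, A i i = 1) ∧ ∀ i j : Fin n, (j : ℕ) < (i : ℕ) → A i j = 0}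

/-- The entries of a matrix, as a point of `ℝ^(n²)`. -/
def matEval {n : ℕ} (A : Mat n ℝ) : Fin n × Fin n → ℝ := fun ij => A ij.1 ij.2

/-- A real unipotent group: a subgroup of `UT(n,ℝ)` which is the common zero set in
`UT(n,ℝ)` of a family of real polynomials in the matrix entries. -/
def IsRealUnipotentGroup (n : ℕ) (G : Set (Mat n ℝ)) : Prop :=
  (∃ S : Set (MvPolynomial (Fin n × Fin n) ℝ),
      G = {A | A ∈ UTset n ∧ ∀ p ∈ S, MvPolynomial.eval (matEval A) p = 0}) ∧
    (1 : Mat n ℝ) ∈ G ∧ (∀ a ∈ G, ∀ b ∈ G, a * b ∈ G) ∧ ∀ a ∈ G, a⁻¹ ∈ G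

/-- A real algebraic subgroup of a real unipotent group `G`. -/
def IsRealAlgSubgroup (n : ℕ) (G H : Set (Mat n ℝ)) : Prop :=
  H ⊆ G ∧ IsRealUnipotentGroup n H

/-- `N` is a normal subgroup-set of `G`. -/
def IsNormalIn (n : ℕ) (G N : Set (Mat n ℝ)) : Prop :=
  ∀ g ∈ G, ∀ x ∈ N, g * x * g⁻¹ ∈ N

/-- `Γ` is a lattice in `G`: a discrete subgroup which is cocompact, i.e. there is a
compact `K ⊆ G` with `K·Γ = G` (equivalently, `G/Γ` is compact). -/
def IsLatticeIn (n : ℕ) (G Γ : Set (Mat n ℝ)) : Prop :=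
  Γ ⊆ G ∧ (1 : Mat n ℝ) ∈ Γ ∧ (∀ a ∈ Γ, ∀ b ∈ Γ, a * b ∈ Γ) ∧ (∀ a ∈ Γ, a⁻¹ ∈ Γ) ∧
    DiscreteTopology ↥Γ ∧
    ∃ K : Set (Mat n ℝ), K ⊆ G ∧ IsCompact K ∧ ∀ g ∈ G, ∃ k ∈ K, ∃ γ ∈ Γ, g = k * γ

/-- `H` is `Γ`-rational: `Γ ∩ H` is a lattice in `H`. -/
def IsRationalFor (n : ℕ) (Γ H : Set (Mat n ℝ)) : Prop :=
  IsLatticeIn n H (Γ ∩ H)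

/-- The hyperreal matrix represented by a sequence of real matrices. -/
def matOfSeq (n : ℕ) (u : ℕ → Mat n ℝ) : Mat n Hyperreal :=
  Matrix.of fun i j => Hyperreal.ofSeq fun k => u k i j

/-- The nonstandard extension `S^♯` of a set `S` of real matrices: hyperreal matrices
represented by sequences landing in `S` on a set of indices in the ultrafilter. -/
def matSharp (n : ℕ) (S : Set (Mat n ℝ)) : Set (Mat n Hyperreal) :=
  {A | ∃ u : ℕ → Mat n ℝ, (∀ᶠ k in hyperfilter ℕ, u k ∈ S) ∧ A = matOfSeq n u}

/-- The canonical embedding of real matrices into hyperreal matrices. -/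
def matCast {n : ℕ} (A : Mat n ℝ) : Mat n Hyperreal :=
  Matrix.of fun i j => (A i j : Hyperreal)

/-- `μ(G)`: elements of `G^♯` all of whose entries are infinitesimally close to the
corresponding entries of the identity matrix. -/
def muSet (n : ℕ) (G : Set (Mat n ℝ)) : Set (Mat n Hyperreal) :=
  {A | A ∈ matSharp n G ∧ ∀ i j, Hyperreal.Infinitesimal (A i j - (1 : Mat n Hyperreal) i j)}

/-- The coset `gH` is near `α`, i.e. `α ∈ μ(G)·g·H^♯`. -/
def NearCoset (n : ℕ) (G : Set (Mat n ℝ)) (g : Mat n ℝ) (H : Set (Mat n ℝ))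
    (α : Mat n Hyperreal) : Prop :=
  α ∈ muSet n G * ({matCast g} * matSharp n H)

/-- The set of standard parts of the finite elements of a set of hyperreal matrices. -/
def matStSet (n : ℕ) (A : Set (Mat n Hyperreal)) : Set (Mat n ℝ) :=
  {B | ∃ a ∈ A, ∀ i j, Hyperreal.IsSt (a i j) (B i j)}

/-- A polynomial map `ℝ^d → Mat n ℝ`. -/
def IsPolyMapVec (d n : ℕ) (F : (Fin d → ℝ) → Mat n ℝ) : Prop :=
  ∃ P : Fin n → Fin n → MvPolynomial (Fin d) ℝ,
    ∀ x i j, F x i j = MvPolynomial.eval x (P i j)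

/-- The inclusion `ℝ →+* ℝ*` as a ring homomorphism. -/
def realHyperRingHom : ℝ →+* Hyperreal where
  toFun r := (r : Hyperreal)
  map_one' := Hyperreal.coe_one
  map_mul' := Hyperreal.coe_mul
  map_zero' := Hyperreal.coe_zero
  map_add' := Hyperreal.coe_add

/-- A semialgebraic subset of matrix space: a finite union of sets defined by finitely
many polynomial equations and finitely many strict polynomial inequalities. -/
def IsSemialgebraic (n : ℕ) (S : Set (Mat n ℝ)) : Prop :=
  ∃ (k : ℕ) (P Q : Fin k → Finset (MvPolynomial (Fin n × Fin n) ℝ)),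
    S = ⋃ t : Fin k, {A | (∀ p ∈ P t, MvPolynomial.eval (matEval A) p = 0) ∧
      ∀ q ∈ Q t, 0 < MvPolynomial.eval (matEval A) q}


open Topology

/-- Lifting sequences through a map which is open at a point, controlled by a gauge. -/
lemma lift_seq {X Y : Type*} [TopologicalSpace X] [TopologicalSpace Y] (f : X → Y)
    (hf : Function.Surjective f) (x₀ : X) (hopen : 𝓝 (f x₀) ≤ map f (𝓝 x₀))
    (φ : X → ℝ) (hφ0 : ∀ x, 0 ≤ φ x) (hφ : Tendsto φ (𝓝 x₀) (𝓝 0))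
    (l : Filter ℕ) (hl : l ≤ atTop) (u : ℕ → Y) (hu : Tendsto u l (𝓝 (f x₀))) :
    ∃ p : ℕ → X, (∀ k, f (p k) = u k) ∧ Tendsto (fun k => φ (p k)) l (𝓝 0) := by
  have key : ∀ k : ℕ, ∃ x, f x = u k ∧ ∀ y, f y = u k → φ x < φ y + 1 / ((k : ℝ) + 1) := by
    intro k
    obtain ⟨x1, hx1⟩ := hf (u k)
    have hpos : (0 : ℝ) < 1 / ((k : ℝ) + 1) := by positivity
    have hne : (φ '' {x | f x = u k}).Nonempty := ⟨φ x1, x1, hx1, rfl⟩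
    have hb : BddBelow (φ '' {x | f x = u k}) := ⟨0, by rintro _ ⟨x, -, rfl⟩; exact hφ0 x⟩
    obtain ⟨_, ⟨x, hx, rfl⟩, hlt⟩ := Real.lt_sInf_add_pos hne hpos
    refine ⟨x, hx, fun y hy => hlt.trans_le ?_⟩
    have := csInf_le hb ⟨y, hy, rfl⟩
    linarith
  choose p hp1 hp2 using key
  refine ⟨p, hp1, ?_⟩
  have h1 : Tendsto (fun k : ℕ => 1 / ((k : ℝ) + 1)) l (𝓝 0) :=
    tendsto_one_div_add_atTop_nhds_zero_nat.mono_left hl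
  rw [Metric.tendsto_nhds]
  intro ε hε
  have hU : {x | φ x < ε / 2} ∈ 𝓝 x₀ := hφ.eventually (gt_mem_nhds (by positivity))
  have hV := hu.eventually (hopen (image_mem_map hU))
  filter_upwards [hV, h1.eventually (gt_mem_nhds (show (0 : ℝ) < ε / 2 by positivity))] with k hk hk2
  obtain ⟨y, hy, hyk⟩ := hk
  have := hp2 k y hyk
  rw [Real.dist_eq, sub_zero, abs_of_nonneg (hφ0 _)]
  change φ y < ε / 2 at hy
  linarith

lemma closed_of_unip {n : ℕ} {G : Set (Mat n ℝ)} (hG : IsRealUnipotentGroup n G) : IsClosed G := by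
  obtain ⟨⟨S, rfl⟩, -⟩ := hG
  have hev : Continuous (matEval : Mat n ℝ → _) := by
    unfold matEval
    fun_prop
  have h1 : IsClosed (UTset n) := by
    have : UTset n = (⋂ i, {A : Mat n ℝ | A i i = 1}) ∩
        ⋂ i, ⋂ j, ⋂ (_ : ((j : Fin n) : ℕ) < ((i : Fin n) : ℕ)), {A : Mat n ℝ | A i j = 0} := by
      ext A
      simp [UTset]
    rw [this]
    refine IsClosed.inter (isClosed_iInter fun i => isClosed_eq (by fun_prop) continuous_const)
      (isClosed_iInter fun i => isClosed_iInter fun j => isClosed_iInter fun _ =>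
        isClosed_eq (by fun_prop) continuous_const)
  have h2 : IsClosed {A : Mat n ℝ | ∀ p ∈ S, MvPolynomial.eval (matEval A) p = 0} := by
    simp only [Set.setOf_forall]
    refine isClosed_iInter fun p => isClosed_iInter fun _ => isClosed_eq ?_ continuous_const
    exact (MvPolynomial.continuous_eval p).comp hev
  exact h1.inter h2

lemma det_of_unip {n : ℕ} {G : Set (Mat n ℝ)} (hG : IsRealUnipotentGroup n G) {A : Mat n ℝ}
    (hA : A ∈ G) : A.det = 1 := by
  obtain ⟨⟨S, rfl⟩, -⟩ := hG
  obtain ⟨⟨hd, hu⟩, -⟩ := hA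
  rw [Matrix.det_of_upperTriangular]
  · simp [hd]
  · intro i j hij
    exact hu i j hij

/-- The group of units attached to a real unipotent group. -/
def unipSub {n : ℕ} (G : Set (Mat n ℝ)) (hG : IsRealUnipotentGroup n G) : Subgroup (Mat n ℝ)ˣ where
  carrier := {u | (u : Mat n ℝ) ∈ G}
  one_mem' := hG.2.1
  mul_mem' := fun {a b} ha hb => hG.2.2.1 _ ha _ hb
  inv_mem' := fun {a} ha => by
    simp only [Set.mem_setOf_eq, Matrix.coe_units_inv]
    exact hG.2.2.2 _ ha

lemma closedEmb_units (n : ℕ) : IsClosedEmbedding (Units.embedProduct (Mat n ℝ)) := by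
  refine ⟨Units.isEmbedding_embedProduct, ?_⟩
  have : Set.range (Units.embedProduct (Mat n ℝ)) =
      {p : Mat n ℝ × (Mat n ℝ)ᵐᵒᵖ | p.1 * p.2.unop = 1} ∩ {p | p.2.unop * p.1 = 1} := by
    ext p
    constructor
    · rintro ⟨u, rfl⟩
      simp
    · rintro ⟨h1, h2⟩
      exact ⟨⟨p.1, p.2.unop, h1, h2⟩, rfl⟩
  rw [this]
  have hc : Continuous fun p : Mat n ℝ × (Mat n ℝ)ᵐᵒᵖ => p.2.unop :=
    MulOpposite.continuous_unop.comp continuous_snd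
  exact (isClosed_eq (continuous_fst.mul hc) continuous_const).inter
    (isClosed_eq (hc.mul continuous_fst) continuous_const)

lemma closedEmb_unipSub {n : ℕ} (G : Set (Mat n ℝ)) (hG : IsRealUnipotentGroup n G) :
    IsClosedEmbedding (fun u : unipSub G hG => Units.embedProduct (Mat n ℝ) u) := by
  have h : IsClosed (unipSub G hG : Set (Mat n ℝ)ˣ) :=
    (closed_of_unip hG).preimage Units.continuous_val
  exact (closedEmb_units n).comp h.isClosedEmbedding_subtypeVal

lemma matEntry_tendsto {n : ℕ} {l : Filter ℕ} {u : ℕ → Mat n ℝ} {A : Mat n ℝ} :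
    Tendsto u l (𝓝 A) ↔ ∀ i j, Tendsto (fun k => u k i j) l (𝓝 (A i j)) := by
  refine tendsto_pi_nhds.trans (forall_congr' fun i => ?_)
  exact tendsto_pi_nhds

lemma mem_muSet_iff {n : ℕ} {G : Set (Mat n ℝ)} {A : Mat n Hyperreal} :
    A ∈ muSet n G ↔ ∃ u : ℕ → Mat n ℝ, (∀ᶠ k in hyperfilter ℕ, u k ∈ G) ∧ A = matOfSeq n u ∧
      Tendsto u (hyperfilter ℕ) (𝓝 1) := by
  have key : ∀ u : ℕ → Mat n ℝ, (∀ i j, Hyperreal.Infinitesimal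
      (matOfSeq n u i j - (1 : Mat n Hyperreal) i j)) ↔ Tendsto u (hyperfilter ℕ) (𝓝 1) := by
    intro u
    rw [matEntry_tendsto]
    refine forall_congr' fun i => forall_congr' fun j => ?_
    have : matOfSeq n u i j - (1 : Mat n Hyperreal) i j =
        Hyperreal.ofSeq (fun k => u k i j - (1 : Mat n ℝ) i j) := by
      by_cases h : i = j
      · subst h
        simp only [Matrix.one_apply_eq]
        rfl
      · simp only [Matrix.one_apply_ne h]
        rfl
    rw [this, Hyperreal.Infinitesimal, Hyperreal.isSt_ofSeq_iff_tendsto]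
    exact tendsto_sub_nhds_zero_iff
  constructor
  · rintro ⟨⟨u, hu, rfl⟩, h⟩
    exact ⟨u, hu, rfl, (key u).1 h⟩
  · rintro ⟨u, hu, rfl, h⟩
    exact ⟨⟨u, hu, rfl⟩, (key u).2 h⟩

lemma matOfSeq_mul {n : ℕ} (u v : ℕ → Mat n ℝ) :
    matOfSeq n u * matOfSeq n v = matOfSeq n (fun k => u k * v k) := by
  ext i j
  have h := map_sum (Filter.Germ.coeRingHom (R := ℝ) (hyperfilter ℕ : Filter ℕ))
    (fun m : Fin n => (fun k => u k i m * v k m j)) Finset.univ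
  have h2 : (∑ m : Fin n, (fun k => u k i m * v k m j)) = fun k => (u k * v k) i j := by
    funext k
    simp [Matrix.mul_apply]
  rw [h2] at h
  rw [Matrix.mul_apply]
  exact h.symm

lemma matOfSeq_congr {n : ℕ} {u v : ℕ → Mat n ℝ} (h : ∀ᶠ k in hyperfilter ℕ, u k = v k) :
    matOfSeq n u = matOfSeq n v := by
  ext i j
  exact Filter.Germ.coe_eq.2 (h.mono fun k hk => by simp [hk])

/-- The two-sided action of `A × B` on the group `C`. -/
def twoSided {Γ : Type*} [Group Γ] (A B C : Subgroup Γ) (hA : A ≤ C) (hB : B ≤ C) :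
    MulAction (A × B) C where
  smul p c := ⟨p.1 * c * (p.2 : Γ)⁻¹,
    C.mul_mem (C.mul_mem (hA p.1.2) c.2) (C.inv_mem (hB p.2.2))⟩
  one_smul c := Subtype.ext (show ((1 : A) : Γ) * c * ((1 : B) : Γ)⁻¹ = c by simp)
  mul_smul p q c := Subtype.ext (show ((p.1 * q.1 : A) : Γ) * c * ((p.2 * q.2 : B) : Γ)⁻¹ =
    p.1 * (q.1 * c * (q.2 : Γ)⁻¹) * (p.2 : Γ)⁻¹ by simp [mul_assoc])

lemma open_at_one {Γ : Type*} [Group Γ] [TopologicalSpace Γ] [IsTopologicalGroup Γ] [T2Space Γ]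
    (A B C : Subgroup Γ) (hA : A ≤ C) (hB : B ≤ C)
    [SigmaCompactSpace A] [SigmaCompactSpace B] [BaireSpace C]
    (hC : ∀ c ∈ C, ∃ a ∈ A, ∃ b ∈ B, c = a * b) :
    let f : A × B → C := fun p => ⟨p.1 * (p.2 : Γ)⁻¹,
      C.mul_mem (hA p.1.2) (C.inv_mem (hB p.2.2))⟩
    𝓝 (f 1) ≤ map f (𝓝 1) := by
  intro f
  letI := twoSided A B C hA hB
  have hsm : ∀ (p : A × B) (c : C), ((p • c : C) : Γ) = p.1 * c * (p.2 : Γ)⁻¹ := fun _ _ => rfl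
  have hf : f = fun p => p • (1 : C) := by
    funext p
    apply Subtype.ext
    rw [hsm]
    simp [f]
  have hcs : ContinuousSMul (A × B) C := ⟨by
    refine continuous_induced_rng.2 ?_
    change Continuous fun q : (A × B) × C => (q.1.1 : Γ) * q.2 * (q.1.2 : Γ)⁻¹
    fun_prop⟩
  have hpt : ∀ c : C, ∃ p : A × B, p • (1 : C) = c := by
    rintro ⟨c, hc⟩
    obtain ⟨a, ha, b, hb, rfl⟩ := hC c hc
    refine ⟨(⟨a, ha⟩, ⟨b⁻¹, B.inv_mem hb⟩), Subtype.ext ?_⟩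
    rw [hsm]
    simp
  have hpre : MulAction.IsPretransitive (A × B) C := ⟨by
    intro x y
    obtain ⟨p, rfl⟩ := hpt x
    obtain ⟨q, rfl⟩ := hpt y
    exact ⟨q * p⁻¹, by rw [smul_smul]; simp⟩⟩
  have := isOpenMap_smul_of_sigmaCompact (G := A × B) (X := C) (1 : C)
  rw [hf]
  exact this.nhds_le 1

lemma mu_eq {n : ℕ} (G : Set (Mat n ℝ)) (hG : IsRealUnipotentGroup n G)
    (N H : Set (Mat n ℝ)) (hN : IsRealAlgSubgroup n G N) (hH : IsRealAlgSubgroup n G H)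
    (hNH : G ⊆ N * H) : muSet n G = muSet n N * muSet n H := by
  classical
  apply Set.Subset.antisymm
  · intro A hA
    obtain ⟨u, huG, rfl, hu⟩ := mem_muSet_iff.1 hA
    let A' := unipSub N hN.2
    let B' := unipSub H hH.2
    let C' := unipSub G hG
    have hAC : A' ≤ C' := fun x hx => hN.1 hx
    have hBC : B' ≤ C' := fun x hx => hH.1 hx
    haveI : SigmaCompactSpace (Mat n ℝ) :=
      inferInstanceAs (SigmaCompactSpace (Fin n → Fin n → ℝ))
    haveI : LocallyCompactSpace (Mat n ℝ) :=
      inferInstanceAs (LocallyCompactSpace (Fin n → Fin n → ℝ))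
    haveI : SigmaCompactSpace (Mat n ℝ)ᵐᵒᵖ :=
      (MulOpposite.opHomeomorph (M := Mat n ℝ)).symm.isClosedEmbedding.sigmaCompactSpace
    haveI : LocallyCompactSpace (Mat n ℝ)ᵐᵒᵖ :=
      (MulOpposite.opHomeomorph (M := Mat n ℝ)).symm.isClosedEmbedding.locallyCompactSpace
    haveI : SigmaCompactSpace A' := (closedEmb_unipSub N hN.2).sigmaCompactSpace
    haveI : SigmaCompactSpace B' := (closedEmb_unipSub H hH.2).sigmaCompactSpace
    haveI : LocallyCompactSpace C' := (closedEmb_unipSub G hG).locallyCompactSpace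
    have mkU : ∀ (S : Set (Mat n ℝ)) (hS : IsRealUnipotentGroup n S) (a : Mat n ℝ), a ∈ S →
        ∃ x : (Mat n ℝ)ˣ, x ∈ unipSub S hS ∧ (x : Mat n ℝ) = a := by
      intro S hS a ha
      have : IsUnit a := by
        rw [Matrix.isUnit_iff_isUnit_det, det_of_unip hS ha]
        exact isUnit_one
      obtain ⟨x, rfl⟩ := this
      exact ⟨x, ha, rfl⟩
    have hC : ∀ c ∈ C', ∃ a ∈ A', ∃ b ∈ B', c = a * b := by
      intro c hc
      obtain ⟨a, ha, b, hb, hab⟩ := hNH hc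
      obtain ⟨x, hx, rfl⟩ := mkU N hN.2 a ha
      obtain ⟨y, hy, rfl⟩ := mkU H hH.2 b hb
      exact ⟨x, hx, y, hy, Units.ext hab.symm⟩
    have hopen := open_at_one A' B' C' hAC hBC hC
    -- the lifted sequence in `G`
    have hw : ∀ k, ∃ w : C', u k ∈ G → ((w : (Mat n ℝ)ˣ) : Mat n ℝ) = u k := by
      intro k
      by_cases hk : u k ∈ G
      · obtain ⟨x, hx, hxu⟩ := mkU G hG _ hk
        exact ⟨⟨x, hx⟩, fun _ => hxu⟩
      · exact ⟨1, fun h => absurd h hk⟩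
    choose w hw using hw
    have hwev : ∀ᶠ k in hyperfilter ℕ, u k = ((w k : (Mat n ℝ)ˣ) : Mat n ℝ) :=
      huG.mono fun k hk => (hw k hk).symm
    have hwt : Tendsto (fun k => ((w k : (Mat n ℝ)ˣ) : Mat n ℝ)) (hyperfilter ℕ) (𝓝 1) :=
      hu.congr' hwev
    have hinv : Tendsto (fun k => (((w k : (Mat n ℝ)ˣ)⁻¹ : (Mat n ℝ)ˣ) : Mat n ℝ))
        (hyperfilter ℕ) (𝓝 1) := by
      have hc : ContinuousAt Inv.inv (1 : Mat n ℝ) := by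
        apply continuousAt_matrix_inv
        rw [Matrix.det_one, Ring.inverse_eq_inv']
        exact continuousAt_inv₀ one_ne_zero
      have := hc.tendsto.comp hwt
      rw [inv_one] at this
      refine this.congr fun k => ?_
      simp [Matrix.coe_units_inv]
    have hwlim : Tendsto w (hyperfilter ℕ) (𝓝 1) := by
      rw [(closedEmb_unipSub G hG).isInducing.tendsto_nhds_iff]
      exact hwt.prodMk_nhds ((MulOpposite.continuous_op.tendsto _).comp hinv)
    let φ : A' × B' → ℝ := fun p =>
      (∑ i, ∑ j, |((p.1 : (Mat n ℝ)ˣ) : Mat n ℝ) i j - (1 : Mat n ℝ) i j|) +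
      ∑ i, ∑ j, |(((p.2 : (Mat n ℝ)ˣ)⁻¹ : (Mat n ℝ)ˣ) : Mat n ℝ) i j - (1 : Mat n ℝ) i j|
    have hφ0 : ∀ p, 0 ≤ φ p := fun p => by positivity
    have hφc : Continuous φ := by
      have h1 : Continuous fun p : A' × B' => ((p.1 : (Mat n ℝ)ˣ) : Mat n ℝ) :=
        Units.continuous_val.comp (continuous_subtype_val.comp continuous_fst)
      have h2 : Continuous fun p : A' × B' => (((p.2 : (Mat n ℝ)ˣ)⁻¹ : (Mat n ℝ)ˣ) : Mat n ℝ) :=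
        Units.continuous_val.comp (continuous_subtype_val.comp continuous_snd).inv
      refine Continuous.add ?_ ?_ <;>
      refine continuous_finsetSum _ fun i _ => continuous_finsetSum _ fun j _ => ?_
      · exact ((h1.matrix_elem i j).sub continuous_const).abs
      · exact ((h2.matrix_elem i j).sub continuous_const).abs
    have hφ1 : φ 1 = 0 := by simp [φ]
    have hφt : Tendsto φ (𝓝 1) (𝓝 0) := by
      have := hφc.tendsto 1
      rwa [hφ1] at this
    obtain ⟨p, hp, hpt⟩ := lift_seq _ (by
      rintro ⟨c, hc⟩
      obtain ⟨a, ha, b, hb, rfl⟩ := hC c hc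
      exact ⟨(⟨a, ha⟩, ⟨b⁻¹, B'.inv_mem hb⟩), Subtype.ext (by simp)⟩) 1 hopen φ hφ0 hφt
      (hyperfilter ℕ) Nat.hyperfilter_le_atTop w (by
        convert hwlim
        simp)
    have hle : ∀ (q : A' × B') (i j : Fin n),
        |((q.1 : (Mat n ℝ)ˣ) : Mat n ℝ) i j - (1 : Mat n ℝ) i j| ≤ φ q ∧
        |(((q.2 : (Mat n ℝ)ˣ)⁻¹ : (Mat n ℝ)ˣ) : Mat n ℝ) i j - (1 : Mat n ℝ) i j| ≤ φ q := by
      have gen : ∀ (F : Fin n → Fin n → ℝ) (i j : Fin n), (∀ i j, 0 ≤ F i j) →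
          F i j ≤ ∑ i, ∑ j, F i j := by
        intro F i j hF
        exact (Finset.single_le_sum (f := fun j => F i j) (fun j _ => hF i j)
          (Finset.mem_univ j)).trans (Finset.single_le_sum (f := fun i => ∑ j, F i j)
          (fun i _ => Finset.sum_nonneg fun j _ => hF i j) (Finset.mem_univ i))
      intro q i j
      have h1 := gen (fun i j => |((q.1 : (Mat n ℝ)ˣ) : Mat n ℝ) i j - (1 : Mat n ℝ) i j|) i j
        (fun _ _ => abs_nonneg _)
      have h2 := gen (fun i j =>
        |(((q.2 : (Mat n ℝ)ˣ)⁻¹ : (Mat n ℝ)ˣ) : Mat n ℝ) i j - (1 : Mat n ℝ) i j|) i j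
        (fun _ _ => abs_nonneg _)
      exact ⟨h1.trans (le_add_of_nonneg_right (by positivity)),
        h2.trans (le_add_of_nonneg_left (by positivity))⟩
    refine Set.mem_mul.2 ⟨matOfSeq n (fun k => (((p k).1 : (Mat n ℝ)ˣ) : Mat n ℝ)), ?_,
      matOfSeq n (fun k => ((((p k).2 : (Mat n ℝ)ˣ)⁻¹ : (Mat n ℝ)ˣ) : Mat n ℝ)), ?_, ?_⟩
    · refine mem_muSet_iff.2 ⟨_, Eventually.of_forall fun k => (p k).1.2, rfl, ?_⟩
      refine matEntry_tendsto.2 fun i j => tendsto_sub_nhds_zero_iff.1 ?_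
      exact squeeze_zero_norm (fun k => (hle (p k) i j).1) hpt
    · refine mem_muSet_iff.2 ⟨_, Eventually.of_forall fun k => B'.inv_mem (p k).2.2, rfl, ?_⟩
      refine matEntry_tendsto.2 fun i j => tendsto_sub_nhds_zero_iff.1 ?_
      exact squeeze_zero_norm (fun k => (hle (p k) i j).2) hpt
    · rw [matOfSeq_mul]
      refine matOfSeq_congr (hwev.mono fun k hk => ?_)
      rw [hk, ← hp k]
      rfl
  · intro A hA
    obtain ⟨x, hx, y, hy, rfl⟩ := Set.mem_mul.1 hA
    obtain ⟨u, huN, rfl, hu⟩ := mem_muSet_iff.1 hx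
    obtain ⟨v, hvH, rfl, hv⟩ := mem_muSet_iff.1 hy
    refine mem_muSet_iff.2 ⟨fun k => u k * v k, ?_, matOfSeq_mul u v, ?_⟩
    · filter_upwards [huN, hvH] with k h1 h2
      exact hG.2.2.1 _ (hN.1 h1) _ (hH.1 h2)
    · simpa using hu.mul hv

/-- if `G = N·H` then `μ(G) = μ(N)·μ(H) = μ(H)·μ(N)`. -/
theorem stmt5 {n : ℕ} (G : Set (Mat n ℝ)) (hG : IsRealUnipotentGroup n G)
    (N H : Set (Mat n ℝ)) (hN : IsRealAlgSubgroup n G N) (hH : IsRealAlgSubgroup n G H)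
    (hNH : G = N * H) :
    muSet n G = muSet n N * muSet n H ∧ muSet n G = muSet n H * muSet n N := by
  refine ⟨mu_eq G hG N H hN hH hNH.le, mu_eq G hG H N hH hN ?_⟩
  intro g hg
  have hgi := hG.2.2.2 g hg
  rw [hNH] at hgi
  obtain ⟨a, ha, b, hb, hab⟩ := Set.mem_mul.1 hgi
  refine Set.mem_mul.2 ⟨b⁻¹, hH.2.2.2.2 b hb, a⁻¹, hN.2.2.2.2 a ha, ?_⟩
  rw [← Matrix.mul_inv_rev, hab]
  exact Matrix.nonsing_inv_nonsing_inv g (by rw [det_of_unip hG hg]; exact isUnit_one)
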